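/- arXiv:2106.11514 — 3 statements merged into one kernel-verified Lean document; each statement's English description precedes it below -/
import Mathlib

section
/- Let g_1, …, g_T ∈ ℝ^d, let 0 < β_{1,t} ≤ β_1 < 1 for all t, β_2 ∈ (0,1), ε ≥ 0, and let m_t, v_t be the AdaMomentum recursions m_0 = 0, v_0 = 0, m_t = β_{1,t} m_{t−1} + (1−β_{1,t}) g_t, v_t = β_2 v_{t−1} + (1−β_2) m_t² + ε (elementwise). Assume γ := β_1/√β_2 < 1. Then for every coordinate i, Σ_{t=1}^T m_{t,i}² / √(t · v_{t,i}) ≤ (√(1 + log T) / ((1−β_1)² (1−γ) √(1−β_2))) · √(Σ_{t=1}^T g_{t,i}²), where terms with v_{t,i} = 0 are interpreted as 0. -/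
/-- For the AdaMomentum recursions with `0 < β_{1,t} ≤ β₁ < 1`,
`β₂ ∈ (0,1)`, `ε ≥ 0` and `γ := β₁/√β₂ < 1`, for every coordinate `i`,
`Σ_{t=1}^T m_{t,i}²/√(t v_{t,i}) ≤ (√(1+log T)/((1−β₁)²(1−γ)√(1−β₂))) ‖g_{1:T,i}‖₂`
(terms with `v_{t,i} = 0` are `0`, which is automatic since division by `0` is `0`). -/
theorem adamomentum_key_sum_bound
    (d T : ℕ) (g : ℕ → Fin d → ℝ) (β1 β2 ε : ℝ)
    (β1t : ℕ → ℝ) (hβ1t : ∀ t, 1 ≤ t → 0 < β1t t ∧ β1t t ≤ β1) (hβ1 : β1 < 1)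
    (hβ2 : 0 < β2 ∧ β2 < 1) (hε : 0 ≤ ε)
    (m v : ℕ → Fin d → ℝ) (hm0 : m 0 = 0) (hv0 : v 0 = 0)
    (hm : ∀ t i, m (t + 1) i = β1t (t + 1) * m t i + (1 - β1t (t + 1)) * g (t + 1) i)
    (hv : ∀ t i, v (t + 1) i = β2 * v t i + (1 - β2) * (m (t + 1) i) ^ 2 + ε)
    (hγ : β1 / Real.sqrt β2 < 1) (i : Fin d) :
    ∑ t ∈ Finset.Icc 1 T, (m t i) ^ 2 / Real.sqrt (t * v t i)
      ≤ Real.sqrt (1 + Real.log T)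
          / ((1 - β1) ^ 2 * (1 - β1 / Real.sqrt β2) * Real.sqrt (1 - β2))
        * Real.sqrt (∑ t ∈ Finset.Icc 1 T, (g t i) ^ 2) := by
  obtain ⟨hb2, hb2'⟩ := hβ2
  have hb1 : 0 < β1 := lt_of_lt_of_le (hβ1t 1 le_rfl).1 (hβ1t 1 le_rfl).2
  have hvn : ∀ t, 0 ≤ v t i := by
    intro t
    induction t with
    | zero => simp [hv0]
    | succ k ih =>
      rw [hv]
      have h1 : 0 ≤ 1 - β2 := by linarith
      positivity
  have hvl : ∀ t, (1 - β2) * (m t i) ^ 2 ≤ v t i := by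
    intro t
    cases t with
    | zero => simp [hv0, hm0]
    | succ k =>
      rw [hv]
      have := mul_nonneg hb2.le (hvn k)
      linarith
  have hstep : ∀ t, (m (t+1) i)^2 ≤ β1 * (m t i)^2 + (g (t+1) i)^2 := by
    intro t
    rw [hm]
    obtain ⟨h1, h2⟩ := hβ1t (t+1) (by omega)
    set b := β1t (t+1)
    have e1 : b * (m t i)^2 ≤ β1 * (m t i)^2 := mul_le_mul_of_nonneg_right h2 (sq_nonneg _)
    have e2 : 0 ≤ b * (g (t+1) i)^2 := by positivity
    have e3 : 0 ≤ b * (1 - b) * (m t i - g (t+1) i)^2 :=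
      mul_nonneg (mul_nonneg h1.le (by linarith)) (sq_nonneg _)
    nlinarith
  have hsum : ∀ n, (1 - β1) * ∑ t ∈ Finset.Icc 1 n, (m t i)^2 + β1 * (m n i)^2
      ≤ ∑ t ∈ Finset.Icc 1 n, (g t i)^2 := by
    intro n
    induction n with
    | zero => simp [hm0]
    | succ k ih =>
      rw [Finset.sum_Icc_succ_top (by omega), Finset.sum_Icc_succ_top (by omega)]
      have := hstep k
      nlinarith
  set S := ∑ t ∈ Finset.Icc 1 T, (m t i)^2 with hS
  set G := ∑ t ∈ Finset.Icc 1 T, (g t i)^2 with hG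
  have hS0 : 0 ≤ S := Finset.sum_nonneg fun _ _ => sq_nonneg _
  have hG0 : 0 ≤ G := Finset.sum_nonneg fun _ _ => sq_nonneg _
  have hSG : (1 - β1) * S ≤ G := by
    have := hsum T
    have h2 : 0 ≤ β1 * (m T i)^2 := by positivity
    linarith
  have hc : 0 < Real.sqrt (1 - β2) := Real.sqrt_pos.2 (by linarith)
  have hterm : ∀ t ∈ Finset.Icc 1 T, (m t i)^2 / Real.sqrt (t * v t i)
      ≤ (1 / Real.sqrt (1 - β2)) * ((1 / Real.sqrt t) * |m t i|) := by
    intro t ht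
    have ht1 : 0 < (t : ℝ) := by
      have := (Finset.mem_Icc.1 ht).1
      exact_mod_cast this
    by_cases h0 : m t i = 0
    · simp [h0]
    have hp : 0 < |m t i| := abs_pos.2 h0
    have hst : 0 < Real.sqrt t := Real.sqrt_pos.2 ht1
    have hle : Real.sqrt t * (Real.sqrt (1 - β2) * |m t i|) ≤ Real.sqrt (t * v t i) := by
      rw [← Real.sqrt_sq_eq_abs, ← Real.sqrt_mul (by linarith), ← Real.sqrt_mul ht1.le]
      exact Real.sqrt_le_sqrt (mul_le_mul_of_nonneg_left (hvl t) ht1.le)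
    calc (m t i)^2 / Real.sqrt (t * v t i)
        ≤ (m t i)^2 / (Real.sqrt t * (Real.sqrt (1 - β2) * |m t i|)) :=
          div_le_div_of_nonneg_left (sq_nonneg _) (by positivity) hle
      _ = _ := by
          rw [← sq_abs]
          field_simp
  have hharm : ∑ t ∈ Finset.Icc 1 T, (1 / Real.sqrt (t:ℝ))^2 ≤ 1 + Real.log T := by
    have h := harmonic_le_one_add_log T
    rw [harmonic_eq_sum_Icc] at h
    push_cast at h
    refine le_trans (le_of_eq (Finset.sum_congr rfl fun t _ => ?_)) h
    rw [div_pow, Real.sq_sqrt (Nat.cast_nonneg t)]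
    simp
  have hL : 0 ≤ 1 + Real.log T := le_trans (Finset.sum_nonneg fun _ _ => sq_nonneg _) hharm
  have hCS : ∑ t ∈ Finset.Icc 1 T, (1 / Real.sqrt (t:ℝ)) * |m t i|
      ≤ Real.sqrt (1 + Real.log T) * Real.sqrt S := by
    refine le_trans (Real.sum_mul_le_sqrt_mul_sqrt _ _ _) ?_
    simp only [sq_abs]
    exact mul_le_mul_of_nonneg_right (Real.sqrt_le_sqrt hharm) (Real.sqrt_nonneg _)
  have hγ0 : 0 ≤ β1 / Real.sqrt β2 := by positivity
  set γ := β1 / Real.sqrt β2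
  have hq : 0 < (1 - β1)^2 * (1 - γ) :=
    mul_pos (pow_pos (by linarith) 2) (by linarith)
  have hq1 : ((1 - β1)^2 * (1 - γ)) ^ 2 ≤ 1 - β1 := by
    have a1 : (1 - β1)^2 * (1 - γ) ≤ (1 - β1)^2 :=
      mul_le_of_le_one_right (sq_nonneg _) (by linarith)
    have a2 : (1 - β1)^2 ≤ 1 - β1 := by nlinarith
    nlinarith
  have hSGs : Real.sqrt S ≤ Real.sqrt G / ((1 - β1)^2 * (1 - γ)) := by
    rw [le_div_iff₀ hq]
    apply Real.le_sqrt_of_sq_le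
    rw [mul_pow, Real.sq_sqrt hS0]
    nlinarith
  calc _ ≤ ∑ t ∈ Finset.Icc 1 T, (1 / Real.sqrt (1 - β2)) * ((1 / Real.sqrt t) * |m t i|) :=
        Finset.sum_le_sum hterm
    _ = (1 / Real.sqrt (1 - β2)) * ∑ t ∈ Finset.Icc 1 T, ((1 / Real.sqrt t) * |m t i|) := by
        rw [Finset.mul_sum]
    _ ≤ (1 / Real.sqrt (1 - β2)) * (Real.sqrt (1 + Real.log T) *
          (Real.sqrt G / ((1 - β1)^2 * (1 - γ)))) := by
        apply mul_le_mul_of_nonneg_left _ (by positivity)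
        exact hCS.trans (mul_le_mul_of_nonneg_left hSGs (Real.sqrt_nonneg _))
    _ = _ := by
        simp only [div_eq_mul_inv, mul_inv]
        ring
end

section
/- Let g_1, …, g_T ∈ ℝ^d, let 0 < β_{1,t} ≤ β_1 < 1 for all t, β_2 ∈ (0,1), ε ≥ 0, and let m_t, v_t be the AdaMomentum recursions m_0 = 0, v_0 = 0, m_t = β_{1,t} m_{t−1} + (1−β_{1,t}) g_t, v_t = β_2 v_{t−1} + (1−β_2) m_t² + ε (elementwise). With γ := β_1/√β_2, for every coordinate i with v_{T,i} > 0 one has m_{T,i}² / √(T · v_{T,i}) ≤ (1 / ((1−β_1)² √(T(1−β_2)))) · Σ_{j=1}^T γ^{T−j} |g_{j,i}|. -/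
/-- For the AdaMomentum recursions with `0 < β_{1,t} ≤ β₁ < 1`,
`β₂ ∈ (0,1)`, `ε ≥ 0` and `γ := β₁/√β₂`, for every coordinate `i` with
`v_{T,i} > 0`,
`m_{T,i}²/√(T v_{T,i}) ≤ (1/((1−β₁)²√(T(1−β₂)))) Σ_{j=1}^T γ^{T−j} |g_{j,i}|`. -/
theorem adamomentum_single_term_bound
    (d T : ℕ) (hT : 1 ≤ T) (g : ℕ → Fin d → ℝ) (β1 β2 ε : ℝ)
    (β1t : ℕ → ℝ) (hβ1t : ∀ t, 1 ≤ t → 0 < β1t t ∧ β1t t ≤ β1) (hβ1 : β1 < 1)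
    (hβ2 : 0 < β2 ∧ β2 < 1) (hε : 0 ≤ ε)
    (m v : ℕ → Fin d → ℝ) (hm0 : m 0 = 0) (hv0 : v 0 = 0)
    (hm : ∀ t i, m (t + 1) i = β1t (t + 1) * m t i + (1 - β1t (t + 1)) * g (t + 1) i)
    (hv : ∀ t i, v (t + 1) i = β2 * v t i + (1 - β2) * (m (t + 1) i) ^ 2 + ε)
    (i : Fin d) (hvT : 0 < v T i) :
    (m T i) ^ 2 / Real.sqrt (T * v T i)
      ≤ 1 / ((1 - β1) ^ 2 * Real.sqrt (T * (1 - β2)))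
        * ∑ j ∈ Finset.Icc 1 T, (β1 / Real.sqrt β2) ^ (T - j) * |g j i| := by
  obtain ⟨hb0, hb1⟩ := hβ2
  have hβ1pos : 0 < β1 := lt_of_lt_of_le (hβ1t 1 le_rfl).1 (hβ1t 1 le_rfl).2
  have hs0 : 0 < Real.sqrt β2 := Real.sqrt_pos.mpr hb0
  have hs1 : Real.sqrt β2 ≤ 1 := Real.sqrt_le_one.mpr hb1.le
  set γ := β1 / Real.sqrt β2 with hγ
  have hγ1 : β1 ≤ γ := by
    rw [hγ, le_div_iff₀ hs0]
    nlinarith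
  have hS : ∀ t : ℕ, |m t i| ≤ ∑ j ∈ Finset.Icc 1 t, γ ^ (t - j) * |g j i| := by
    intro t
    induction t with
    | zero => simp [hm0]
    | succ t ih =>
      obtain ⟨h1, h2⟩ := hβ1t (t + 1) (by omega)
      have e : ∑ j ∈ Finset.Icc 1 (t + 1), γ ^ (t + 1 - j) * |g j i|
          = γ * (∑ j ∈ Finset.Icc 1 t, γ ^ (t - j) * |g j i|) + |g (t + 1) i| := by
        rw [Finset.sum_Icc_succ_top (by omega), Finset.mul_sum]
        congr 1
        · apply Finset.sum_congr rfl
          intro j hj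
          rw [Finset.mem_Icc] at hj
          rw [Nat.sub_add_comm hj.2, pow_succ]
          ring
        · simp
      rw [e, hm]
      refine (abs_add_le _ _).trans ?_
      rw [abs_mul, abs_mul, abs_of_pos h1, abs_of_pos (by linarith : 0 < 1 - β1t (t + 1))]
      have h3 : β1t (t + 1) * |m t i| ≤ γ * ∑ j ∈ Finset.Icc 1 t, γ ^ (t - j) * |g j i| :=
        mul_le_mul (h2.trans hγ1) ih (abs_nonneg _) (by linarith)
      nlinarith [abs_nonneg (g (t + 1) i)]
  have hvn : ∀ t : ℕ, 0 ≤ v t i := by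
    intro t
    induction t with
    | zero => simp [hv0]
    | succ t ih =>
      rw [hv]
      have : 0 ≤ 1 - β2 := by linarith
      positivity
  have hvm : (1 - β2) * (m T i) ^ 2 ≤ v T i := by
    obtain ⟨t, rfl⟩ : ∃ t, T = t + 1 := ⟨T - 1, by omega⟩
    rw [hv t i]
    have := mul_nonneg hb0.le (hvn t)
    linarith
  have hTp : (0 : ℝ) < T := by exact_mod_cast hT
  have hA : 0 < Real.sqrt (T * v T i) := Real.sqrt_pos.mpr (by positivity)
  have hBp : 0 < Real.sqrt (T * (1 - β2)) :=
    Real.sqrt_pos.mpr (mul_pos hTp (by linarith))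
  have hkey : Real.sqrt (T * (1 - β2)) * |m T i| ≤ Real.sqrt (T * v T i) := by
    apply Real.le_sqrt_of_sq_le
    rw [mul_pow, Real.sq_sqrt (mul_pos hTp (by linarith)).le, sq_abs, mul_assoc]
    exact mul_le_mul_of_nonneg_left hvm hTp.le
  have h1 : (m T i) ^ 2 / Real.sqrt (T * v T i) ≤ |m T i| / Real.sqrt (T * (1 - β2)) := by
    rw [div_le_div_iff₀ hA hBp, ← sq_abs]
    have := mul_le_mul_of_nonneg_left hkey (abs_nonneg (m T i))
    linarith
  refine h1.trans ?_
  rw [div_eq_mul_one_div, mul_comm]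
  have hq : 0 < (1 - β1) ^ 2 := pow_pos (by linarith) 2
  have hq1 : (1 - β1) ^ 2 ≤ 1 := pow_le_one₀ (by linarith) (by linarith)
  refine mul_le_mul ?_ (hS T) (abs_nonneg _) (by positivity)
  apply one_div_le_one_div_of_le (by positivity)
  nlinarith
end

section
/- Let f : ℝ^d → ℝ be differentiable with L-Lipschitz gradient. Let θ, m ∈ ℝ^d, α > 0, and v ∈ ℝ^d with v_i > 0 for all i, and suppose there are constants 0 < b_l ≤ b_u such that b_l ≤ 1/√(v_i) ≤ b_u for every coordinate i. Define θ' = θ − α m/√v (elementwise division). Then f(θ') ≤ f(θ) + (α b_u/2) ‖∇f(θ) − m‖_2² + ((L α² b_u² − α b_l)/2) ‖m‖_2² − (α b_l/2) ‖∇f(θ)‖_2². -/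
theorem descent_aux {E : Type*} [NormedAddCommGroup E] [InnerProductSpace ℝ E] [CompleteSpace E]
    (f : E → ℝ) (f' : E → E) (hgrad : ∀ x, HasGradientAt f (f' x) x)
    (L : ℝ) (hLip : ∀ x y, ‖f' x - f' y‖ ≤ L * ‖x - y‖) (x w : E) :
    f (x + w) ≤ f x + inner ℝ (f' x) w + L / 2 * ‖w‖ ^ 2 := by
  have hd : ∀ t : ℝ, HasDerivAt
      (fun t : ℝ => f (x + t • w) - t * inner ℝ (f' x) w - L / 2 * ‖w‖ ^ 2 * t ^ 2)
      (inner ℝ (f' (x + t • w)) w - inner ℝ (f' x) w - L * ‖w‖ ^ 2 * t) t := by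
    intro t
    have h1 : HasDerivAt (fun t : ℝ => x + t • w) w t := by
      simpa using ((hasDerivAt_id t).smul_const w).const_add x
    have h2 := (hgrad (x + t • w)).hasFDerivAt.comp_hasDerivAt t h1
    have h3 : HasDerivAt (fun t : ℝ => f (x + t • w)) (inner ℝ (f' (x + t • w)) w) t := by
      simpa [Function.comp_def] using h2
    have h4 := (h3.sub ((hasDerivAt_id t).mul_const (inner ℝ (f' x) w))).sub
      (((hasDerivAt_id t).pow 2).const_mul (L / 2 * ‖w‖ ^ 2))
    refine HasDerivAt.congr_deriv (f := fun t : ℝ => f (x + t • w) - t * inner ℝ (f' x) w - L / 2 * ‖w‖ ^ 2 * t ^ 2) h4 ?_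
    simp
    ring
  have hanti : AntitoneOn
      (fun t : ℝ => f (x + t • w) - t * inner ℝ (f' x) w - L / 2 * ‖w‖ ^ 2 * t ^ 2)
      (Set.Icc 0 1) := by
    apply antitoneOn_of_deriv_nonpos (convex_Icc 0 1)
    · exact fun t _ => (hd t).continuousAt.continuousWithinAt
    · exact fun t _ => (hd t).differentiableAt.differentiableWithinAt
    · intro t ht
      rw [interior_Icc] at ht
      rw [(hd t).deriv, ← inner_sub_left]
      have h5 := real_inner_le_norm (f' (x + t • w) - f' x) w
      have h6 := hLip (x + t • w) x
      rw [add_sub_cancel_left, norm_smul, Real.norm_of_nonneg ht.1.le] at h6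
      have h7 := mul_le_mul_of_nonneg_right h6 (norm_nonneg w)
      nlinarith
  have h := hanti (Set.left_mem_Icc.2 zero_le_one) (Set.right_mem_Icc.2 zero_le_one) zero_le_one
  simp at h
  linarith

/-- Descent step for AdaMomentum. If `f` is differentiable with
`L`-Lipschitz gradient, `0 < b_l ≤ 1/√(v_i) ≤ b_u`, and
`θ' = θ − α m/√v` elementwise with `α > 0`, then
`f(θ') ≤ f(θ) + (α b_u/2)‖∇f(θ) − m‖² + ((Lα²b_u² − αb_l)/2)‖m‖² − (αb_l/2)‖∇f(θ)‖²`. -/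
theorem adamomentum_descent_step
    (d : ℕ) (f : EuclideanSpace ℝ (Fin d) → ℝ)
    (f' : EuclideanSpace ℝ (Fin d) → EuclideanSpace ℝ (Fin d))
    (hgrad : ∀ x, HasGradientAt f (f' x) x)
    (L : ℝ) (hLip : ∀ x y, ‖f' x - f' y‖ ≤ L * ‖x - y‖)
    (θ m θ' : EuclideanSpace ℝ (Fin d)) (α : ℝ) (hα : 0 < α)
    (v : Fin d → ℝ) (hv : ∀ i, 0 < v i)
    (bl bu : ℝ) (hbl : 0 < bl) (hblu : bl ≤ bu)
    (hb : ∀ i, bl ≤ 1 / Real.sqrt (v i) ∧ 1 / Real.sqrt (v i) ≤ bu)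
    (hθ' : ∀ i, θ' i = θ i - α * m i / Real.sqrt (v i)) :
    f θ' ≤ f θ + α * bu / 2 * ‖f' θ - m‖ ^ 2
        + (L * α ^ 2 * bu ^ 2 - α * bl) / 2 * ‖m‖ ^ 2
        - α * bl / 2 * ‖f' θ‖ ^ 2 := by
  have hD := descent_aux f f' hgrad L hLip θ (θ' - θ)
  rw [add_sub_cancel] at hD
  have hw : ∀ i, (θ' - θ) i = -(α * (1 / Real.sqrt (v i)) * m i) := by
    intro i
    rw [PiLp.sub_apply, hθ' i]
    ring
  have hbu : 0 < bu := hbl.trans_le hblu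
  have hn : ‖θ' - θ‖ ^ 2 ≤ α ^ 2 * bu ^ 2 * ‖m‖ ^ 2 := by
    rw [EuclideanSpace.real_norm_sq_eq, EuclideanSpace.real_norm_sq_eq, Finset.mul_sum]
    apply Finset.sum_le_sum
    intro i _
    rw [hw i]
    have h1 : (1 / Real.sqrt (v i)) ^ 2 ≤ bu ^ 2 :=
      pow_le_pow_left₀ (hbl.le.trans (hb i).1) (hb i).2 2
    have h2 := mul_le_mul_of_nonneg_left h1 (mul_nonneg (sq_nonneg α) (sq_nonneg (m i)))
    linarith
  have hLn : L * ‖θ' - θ‖ ^ 2 ≤ L * (α ^ 2 * bu ^ 2 * ‖m‖ ^ 2) := by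
    by_cases hm : m = 0
    · have h0 : ‖θ' - θ‖ ^ 2 = 0 := le_antisymm (by simpa [hm] using hn) (sq_nonneg _)
      rw [h0, hm]
      simp
    · have hL : 0 ≤ L := by
        have h1 := (norm_nonneg _).trans (hLip m 0)
        rw [sub_zero] at h1
        exact nonneg_of_mul_nonneg_left h1 (norm_pos_iff.2 hm)
      exact mul_le_mul_of_nonneg_left hn hL
  have hi : inner ℝ (f' θ) (θ' - θ) ≤ α * bu / 2 * ‖f' θ - m‖ ^ 2
      - α * bl / 2 * ‖m‖ ^ 2 - α * bl / 2 * ‖f' θ‖ ^ 2 := by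
    rw [EuclideanSpace.real_norm_sq_eq, EuclideanSpace.real_norm_sq_eq,
      EuclideanSpace.real_norm_sq_eq, Finset.mul_sum, Finset.mul_sum, Finset.mul_sum,
      ← Finset.sum_sub_distrib, ← Finset.sum_sub_distrib, PiLp.inner_apply]
    apply Finset.sum_le_sum
    intro i _
    rw [hw i, PiLp.sub_apply]
    simp only [RCLike.inner_apply, conj_trivial]
    obtain ⟨h1, h2⟩ := hb i
    generalize 1 / Real.sqrt (v i) = s at h1 h2
    have e1 := mul_le_mul_of_nonneg_left h2 (mul_nonneg hα.le (sq_nonneg (f' θ i - m i)))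
    have e2 := mul_le_mul_of_nonneg_left h1 (mul_nonneg hα.le (sq_nonneg (m i)))
    have e3 := mul_le_mul_of_nonneg_left h1 (mul_nonneg hα.le (sq_nonneg (f' θ i)))
    linarith
  linarith
end
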